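/- arXiv:1409.2536 — 2 statements merged into one kernel-verified Lean document; each statement's English description precedes it below -/
import Mathlib

section
/- (Strong converse, constant composition) Let W be a classical–quantum channel from a finite alphabet X with |X| = a into the density operators on ℂ^d, and λ ∈ (0,1). Every (n,λ)-code (f,D) all of whose codewords f(m) have the same type P satisfies |M| ≤ (4/(1−λ))·exp₂(n·I(P;W) + 2K·d·√a·δ·√n), where δ = √(32ad)/(1−λ) and K = 2 log₂(e)/e. -/
open Matrix BigOperators Finset
open scoped Classical ComplexOrder

noncomputable section

/-- Square complex matrices of size `d` (operators on `ℂ^d`). -/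
abbrev Mat (d : ℕ) := Matrix (Fin d) (Fin d) ℂ

/-- Operators on the `n`-fold tensor power `(ℂ^d)^{⊗n}`, indexed by `Fin n → Fin d`. -/
abbrev MatPow (d n : ℕ) := Matrix (Fin n → Fin d) (Fin n → Fin d) ℂ

/-- Tensor product `A 0 ⊗ A 1 ⊗ ⋯ ⊗ A (n-1)` of a family of `d × d` matrices. -/
def tensorPow {d n : ℕ} (A : Fin n → Mat d) : MatPow d n :=
  Matrix.of fun j k => ∏ i, A i (j i) (k i)

/-- Exponential to base 2. -/
def exp2 (t : ℝ) : ℝ := (2 : ℝ) ^ t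

/-- `P` is a probability distribution on the finite set `X`. -/
def IsProbDist {X : Type*} [Fintype X] (P : X → ℝ) : Prop :=
  (∀ x, 0 ≤ P x) ∧ ∑ x, P x = 1

/-- `ρ` is a density operator (a state): positive semidefinite with trace one. -/
def IsState {ι : Type*} [Fintype ι] [DecidableEq ι] (ρ : Matrix ι ι ℂ) : Prop :=
  ρ.PosSemidef ∧ ρ.trace = 1

/-- `N(x|x^n)`: number of occurrences of the letter `x` in the sequence `xs`. -/
def countIn {X : Type*} {n : ℕ} (x : X) (xs : Fin n → X) : ℕ :=
  (Finset.univ.filter fun i => xs i = x).card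

/-- The variance-typical set `T^n_{P,δ}`. -/
def typicalSet {X : Type*} [Fintype X] (n : ℕ) (P : X → ℝ) (δ : ℝ) :
    Finset (Fin n → X) :=
  Finset.univ.filter fun xs => ∀ x : X,
    |(countIn x xs : ℝ) - n * P x| ≤ δ * Real.sqrt n * Real.sqrt (P x * (1 - P x))

/-- Product (i.i.d.) probability `P^{⊗n}(A)` of a set `A` of sequences. -/
def prodProb {X : Type*} [Fintype X] {n : ℕ} (P : X → ℝ) (A : Finset (Fin n → X)) : ℝ :=
  ∑ xs ∈ A, ∏ i, P (xs i)

/-- Shannon entropy to base 2. -/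
def shannonEntropy {X : Type*} [Fintype X] (P : X → ℝ) : ℝ :=
  -∑ x, P x * Real.logb 2 (P x)

/-- von Neumann entropy to base 2, `H(ρ) = -Tr(ρ log₂ ρ)`, via the eigenvalues. -/
def vnEntropy {d : ℕ} (ρ : Mat d) : ℝ :=
  if h : ρ.IsHermitian then -∑ i, h.eigenvalues i * Real.logb 2 (h.eigenvalues i) else 0

/-- The constant `K = 2 log₂(e) / e`. -/
def Kconst : ℝ := 2 * Real.logb 2 (Real.exp 1) / Real.exp 1

/-- A diagonalization `ρ = Σ_j R j • π j` into one-dimensional mutually orthogonal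
eigenprojectors, with eigenvalue list `R` a probability distribution. -/
def IsDiagonalization {d : ℕ} (ρ : Mat d) (R : Fin d → ℝ) (π : Fin d → Mat d) : Prop :=
  (∀ j, (π j).PosSemidef) ∧ (∀ j, π j * π j = π j) ∧ (∀ j, (π j).trace = 1) ∧
    (∀ j k, j ≠ k → π j * π k = 0) ∧ (∑ j, π j = 1) ∧
    ρ = ∑ j, (R j : ℂ) • π j ∧ IsProbDist R

/-- The variance-typical projector `Π^n_{ρ,δ}` of a state with fixed diagonalization
`(R, π)`. -/
def typicalProj {d : ℕ} (n : ℕ) (R : Fin d → ℝ) (π : Fin d → Mat d) (δ : ℝ) : MatPow d n :=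
  ∑ js ∈ typicalSet n R δ, tensorPow fun i => π (js i)

/-- `B` is an `η`-shadow of the state `σ`: `0 ≤ B ≤ 1` and `Tr(σB) ≥ η`. -/
def IsShadow {ι : Type*} [Fintype ι] [DecidableEq ι] (σ B : Matrix ι ι ℂ) (η : ℝ) : Prop :=
  B.PosSemidef ∧ ((1 : Matrix ι ι ℂ) - B).PosSemidef ∧ η ≤ (Matrix.trace (σ * B)).re

/-- Average state `PW = Σ_x P(x) W_x` of a cq-channel under input distribution `P`. -/
def avgState {X : Type*} [Fintype X] {d : ℕ} (P : X → ℝ) (W : X → Mat d) : Mat d :=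
  ∑ x, (P x : ℂ) • W x

/-- Conditional von Neumann entropy `H(W|P) = Σ_x P(x) H(W_x)`. -/
def condEntropy {X : Type*} [Fintype X] {d : ℕ} (P : X → ℝ) (W : X → Mat d) : ℝ :=
  ∑ x, P x * vnEntropy (W x)

/-- Mutual information `I(P;W) = H(PW) − H(W|P)`. -/
def mutualInfo {X : Type*} [Fintype X] {d : ℕ} (P : X → ℝ) (W : X → Mat d) : ℝ :=
  vnEntropy (avgState P W) - condEntropy P W

/-- Capacity `C(W) = max_P I(P;W)`. -/
def capacity {X : Type*} [Fintype X] {d : ℕ} (W : X → Mat d) : ℝ :=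
  sSup {c | ∃ P : X → ℝ, IsProbDist P ∧ c = mutualInfo P W}

/-- `(f, D)` (with message set `M` inside the outcome index set `M'`) is an
`(n,λ)`-code for the cq-channel `W`: the `D m` are positive semidefinite, sum to the
identity, and each message is decoded correctly with probability at least `1 - λ`. -/
def IsCode {X : Type*} [Fintype X] {d n : ℕ} (W : X → Mat d) (lam : ℝ)
    {M' : Type*} [Fintype M'] (M : Finset M') (f : M' → Fin n → X)
    (D : M' → MatPow d n) : Prop :=
  (∀ m, (D m).PosSemidef) ∧ (∑ m, D m = 1) ∧
    ∀ m ∈ M, 1 - lam ≤ (Matrix.trace (tensorPow (fun i => W (f m i)) * D m)).re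

/-- `N(n,λ)`: maximal size of an `(n,λ)`-code for `W`. -/
def maxCodeSize {X : Type*} [Fintype X] (d : ℕ) (W : X → Mat d) (n : ℕ) (lam : ℝ) : ℕ :=
  sSup {k | ∃ (M' : Type) (_ : Fintype M') (M : Finset M') (f : M' → Fin n → X)
    (D : M' → MatPow d n), IsCode W lam M f D ∧ M.card = k}

/-- Trace norm `‖A‖₁ = Tr|A|`: the sum of the singular values. -/
def traceNorm {ι : Type*} [Fintype ι] [DecidableEq ι] (A : Matrix ι ι ℂ) : ℝ :=
  ∑ i, Real.sqrt ((Matrix.posSemidef_conjTranspose_mul_self A).1.eigenvalues i)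

/-- Trace distance `D(ρ,σ) = ½‖ρ−σ‖₁`. -/
def traceDist {ι : Type*} [Fintype ι] [DecidableEq ι] (ρ σ : Matrix ι ι ℂ) : ℝ :=
  traceNorm (ρ - σ) / 2

/-- (Pure-state) fidelity `F(ρ,σ) = Tr(ρσ)`. -/
def fidelity {ι : Type*} [Fintype ι] [DecidableEq ι] (ρ σ : Matrix ι ι ℂ) : ℝ :=
  (Matrix.trace (ρ * σ)).re

/-- A pure state: the rank-one orthogonal projector `|ψ⟩⟨ψ|` onto the span of a
unit vector `ψ`. -/
def IsPureState {ι : Type*} [Fintype ι] (ρ : Matrix ι ι ℂ) : Prop :=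
  ∃ ψ : ι → ℂ, (∑ i, star (ψ i) * ψ i) = 1 ∧ ρ = Matrix.vecMulVec ψ (star ψ)

/-- The set of eigenvalue-index sequences `js` that are variance-typical, with
constant `δ`, for the distribution `q x` on each block `I_x = {i : xs i = x}`. -/
def condTypicalSet {X : Type*} [Fintype X] {n d : ℕ} (xs : Fin n → X)
    (q : X → Fin d → ℝ) (δ : ℝ) : Finset (Fin n → Fin d) :=
  Finset.univ.filter fun js => ∀ (x : X) (k : Fin d),
    |((Finset.univ.filter fun i => xs i = x ∧ js i = k).card : ℝ) - (countIn x xs : ℝ) * q x k|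
      ≤ δ * Real.sqrt (countIn x xs) * Real.sqrt (q x k * (1 - q x k))

/-- Conditional variance-typical projector `Π^n_{W,δ}(x^n) = ⊗_{x∈X} Π^{I_x}_{W_x,δ}`,
with respect to fixed diagonalizations `W_x = Σ_j (q x j) • (π x j)`. -/
def condTypicalProj {X : Type*} [Fintype X] {d : ℕ} {n : ℕ} (xs : Fin n → X)
    (q : X → Fin d → ℝ) (π : X → Fin d → Mat d) (δ : ℝ) : MatPow d n :=
  ∑ js ∈ condTypicalSet xs q δ, tensorPow fun i => π (xs i) (js i)

/-! ### Matrix lemmas -/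

lemma sc_diagonalize {ι : Type*} [Fintype ι] [DecidableEq ι] {A : Matrix ι ι ℂ}
    (h : A.IsHermitian) : ∃ U : Matrix ι ι ℂ, U * Uᴴ = 1 ∧ Uᴴ * U = 1 ∧
      A = U * diagonal (fun i => (h.eigenvalues i : ℂ)) * Uᴴ := by
  refine ⟨h.eigenvectorUnitary, ?_, ?_, ?_⟩
  · exact Matrix.mem_unitaryGroup_iff.1 h.eigenvectorUnitary.2
  · exact Matrix.mem_unitaryGroup_iff'.1 h.eigenvectorUnitary.2
  · exact h.spectral_theorem

lemma sc_trace_diag {ι : Type*} [Fintype ι] [DecidableEq ι] (U B : Matrix ι ι ℂ) (q : ι → ℂ) :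
    (U * diagonal q * Uᴴ * B).trace = ∑ j, q j * (Uᴴ * B * U) j j := by
  have : (U * diagonal q * Uᴴ * B).trace = (diagonal q * (Uᴴ * B * U)).trace := by
    rw [Matrix.mul_assoc, Matrix.mul_assoc, Matrix.trace_mul_comm]
    simp only [Matrix.mul_assoc]
  rw [this]
  simp [Matrix.trace, Matrix.diagonal_mul]

lemma sc_trace_mul_nonneg {ι : Type*} [Fintype ι] [DecidableEq ι] {A B : Matrix ι ι ℂ}
    (hA : A.PosSemidef) (hB : B.PosSemidef) : 0 ≤ (A * B).trace.re := by
  obtain ⟨U, -, -, hU⟩ := sc_diagonalize hA.1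
  rw [hU, sc_trace_diag, Complex.re_sum]
  refine Finset.sum_nonneg fun j _ => ?_
  rw [Complex.re_ofReal_mul]
  refine mul_nonneg (hA.eigenvalues_nonneg j) ?_
  exact (Complex.le_def.1 (hB.conjTranspose_mul_mul_same U).diag_nonneg).1

lemma sc_trace_mono {ι : Type*} [Fintype ι] [DecidableEq ι] {A B C : Matrix ι ι ℂ}
    (hA : A.PosSemidef) (h : (C - B).PosSemidef) : (A * B).trace.re ≤ (A * C).trace.re := by
  have := sc_trace_mul_nonneg hA h
  rw [Matrix.mul_sub, Matrix.trace_sub, Complex.sub_re] at this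
  linarith

lemma sc_pinch {ι : Type*} [Fintype ι] [DecidableEq ι] {R T D : Matrix ι ι ℂ}
    (hR : R.PosSemidef) (hT : Tᴴ = T) (hTT : T * T = T) (hD : D.PosSemidef)
    (hD1 : (1 - D).PosSemidef) :
    (R * D).trace.re ≤ 2 * (R * (T * D * T)).trace.re + 2 * (R * (1 - T)).trace.re := by
  have h1 : ((2 • (T * D * T) + 2 • (1 - T)) - D).PosSemidef := by
    have e : (2 • (T * D * T) + 2 • (1 - T)) - D =
        (T - (1 - T)) * D * (T - (1 - T))ᴴ +
          ((1 - T) * (1 - D) * (1 - T)ᴴ + (1 - T) * (1 - D) * (1 - T)ᴴ) := by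
      simp only [Matrix.conjTranspose_sub, Matrix.conjTranspose_one, hT]
      have : (1 - T) * (1 - D) * (1 - T) = (1 - T) - (1 - T) * D * (1 - T) := by
        simp only [mul_sub, sub_mul, mul_one, one_mul, hTT]
        abel
      rw [this]
      noncomm_ring
    rw [e]
    have := hD1.mul_mul_conjTranspose_same (1 - T)
    exact (hD.mul_mul_conjTranspose_same _).add (this.add this)
  have := sc_trace_mono hR h1
  rw [Matrix.mul_add, Matrix.trace_add, Matrix.mul_smul, Matrix.mul_smul, Matrix.trace_smul,
    Matrix.trace_smul] at this
  simpa using this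

lemma sc_compress_le_one {ι : Type*} [Fintype ι] [DecidableEq ι] {T D : Matrix ι ι ℂ}
    (hT : Tᴴ = T) (hTT : T * T = T) (hD1 : (1 - D).PosSemidef) :
    (1 - T * D * T).PosSemidef := by
  have e : 1 - T * D * T = (1 - T) * (1 - T)ᴴ + T * (1 - D) * Tᴴ := by
    simp only [Matrix.conjTranspose_sub, Matrix.conjTranspose_one, hT]
    simp only [mul_sub, sub_mul, mul_one, one_mul, hTT]
    abel
  rw [e]
  exact (Matrix.posSemidef_self_mul_conjTranspose _).add (hD1.mul_mul_conjTranspose_same _)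

lemma sc_shadow {ι : Type*} [Fintype ι] [DecidableEq ι] {U B : Matrix ι ι ℂ} (q : ι → ℝ)
    (hU : U * Uᴴ = 1) (hU' : Uᴴ * U = 1) (hq : ∀ i, 0 ≤ q i) (hB : B.PosSemidef)
    (hB1 : (1 - B).PosSemidef) (c : ℝ) (hc0 : 0 ≤ c) :
    (U * diagonal (fun i => (q i : ℂ)) * Uᴴ * B).trace.re ≤
      (∑ j ∈ univ.filter (fun j => c < q j), q j) + c * B.trace.re := by
  rw [sc_trace_diag, Complex.re_sum]
  have ht : B.trace.re = ∑ j, ((Uᴴ * B * U) j j).re := by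
    have : B.trace = (Uᴴ * B * U).trace := by
      rw [Matrix.trace_mul_comm, ← Matrix.mul_assoc, hU, Matrix.one_mul]
    rw [this, Matrix.trace, Complex.re_sum]; rfl
  rw [ht, Finset.sum_filter, Finset.mul_sum, ← Finset.sum_add_distrib]
  refine Finset.sum_le_sum fun j _ => ?_
  rw [Complex.re_ofReal_mul]
  have h0 : 0 ≤ ((Uᴴ * B * U) j j).re :=
    (Complex.le_def.1 (hB.conjTranspose_mul_mul_same U).diag_nonneg).1
  have h1 : ((Uᴴ * B * U) j j).re ≤ 1 := by
    have h := (Complex.le_def.1 ((hB1.conjTranspose_mul_mul_same U).diag_nonneg (i := j))).1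
    rw [Matrix.mul_sub, Matrix.sub_mul, Matrix.mul_one, hU'] at h
    simp at h
    exact h
  set b := ((Uᴴ * B * U) j j).re
  split_ifs with hc
  · have := hq j
    nlinarith [mul_nonneg hc0 h0]
  · push Not at hc
    nlinarith

/-! ### Tensor powers -/

lemma sc_tensor_mul {d n : ℕ} (A B : Fin n → Mat d) :
    tensorPow A * tensorPow B = tensorPow (fun i => A i * B i) := by
  ext j k
  simp only [tensorPow, Matrix.mul_apply, Matrix.of_apply]
  rw [Fintype.prod_sum]
  simp only [Finset.prod_mul_distrib]

lemma sc_tensor_conj {d n : ℕ} (A : Fin n → Mat d) :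
    (tensorPow A)ᴴ = tensorPow (fun i => (A i)ᴴ) := by
  ext j k
  simp [tensorPow, Matrix.conjTranspose_apply]

lemma sc_tensor_diag {d n : ℕ} (q : Fin n → Fin d → ℂ) :
    tensorPow (fun i => diagonal (q i)) = diagonal (fun js => ∏ i, q i (js i)) := by
  ext j k
  simp only [tensorPow, Matrix.of_apply, Matrix.diagonal_apply]
  split_ifs with h
  · subst h; simp
  · obtain ⟨i, hi⟩ := Function.ne_iff.1 h
    exact Finset.prod_eq_zero (Finset.mem_univ i) (by simp [hi])

lemma sc_tensor_one {d n : ℕ} : tensorPow (fun _ : Fin n => (1 : Mat d)) = 1 := by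
  have := sc_tensor_diag (n := n) (fun _ _ => (1 : ℂ)) (d := d)
  simpa using this

/-! ### Chebyshev for product weights -/

lemma sc_sum_cons {d n : ℕ} (F : (Fin (n + 1) → Fin d) → ℝ) :
    ∑ js, F js = ∑ k, ∑ js : Fin n → Fin d, F (Fin.cons k js) := by
  rw [← Fintype.sum_prod_type']
  exact (Fintype.sum_equiv (Fin.consEquiv fun _ => Fin d) _ _ (fun _ => rfl)).symm

lemma sc_sum_one {d n : ℕ} (V : Fin n → Fin d → ℝ) (hV : ∀ i, ∑ k, V i k = 1) :
    ∑ js : Fin n → Fin d, ∏ i, V i (js i) = 1 := by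
  rw [← Fintype.prod_sum]; simp [hV]

lemma sc_moments {d : ℕ} : ∀ (n : ℕ) (V h : Fin n → Fin d → ℝ) (_ : ∀ i, ∑ k, V i k = 1)
    (_ : ∀ i, ∑ k, V i k * h i k = 0),
    (∑ js : Fin n → Fin d, (∏ i, V i (js i)) * ∑ i, h i (js i) = 0) ∧
    (∑ js : Fin n → Fin d, (∏ i, V i (js i)) * (∑ i, h i (js i)) ^ 2 =
      ∑ i, ∑ k, V i k * h i k ^ 2)
  | 0, V, h, _, _ => by simp
  | n + 1, V, h, h1, h0 => by
    obtain ⟨i1, i2⟩ := sc_moments n (fun i => V i.succ) (fun i => h i.succ)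
      (fun i => h1 _) (fun i => h0 _)
    have i0 := sc_sum_one (fun i : Fin n => V i.succ) (fun i => h1 _)
    constructor
    · rw [sc_sum_cons]
      simp only [Fin.prod_univ_succ, Fin.sum_univ_succ, Fin.cons_zero, Fin.cons_succ]
      calc _ = ∑ k, (V 0 k * h 0 k * (∑ js : Fin n → Fin d, ∏ i, V i.succ (js i)) +
            V 0 k * ∑ js : Fin n → Fin d, (∏ i, V i.succ (js i)) * ∑ i, h i.succ (js i)) := by
              refine Finset.sum_congr rfl fun k _ => ?_
              rw [Finset.mul_sum, Finset.mul_sum, ← Finset.sum_add_distrib]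
              exact Finset.sum_congr rfl fun js _ => by ring
        _ = 0 := by rw [i0, i1]; simp [h0]
    · rw [sc_sum_cons]
      simp only [Fin.prod_univ_succ, Fin.sum_univ_succ, Fin.cons_zero, Fin.cons_succ]
      calc _ = ∑ k, (V 0 k * h 0 k ^ 2 * (∑ js : Fin n → Fin d, ∏ i, V i.succ (js i)) +
            2 * (V 0 k * h 0 k) *
              (∑ js : Fin n → Fin d, (∏ i, V i.succ (js i)) * ∑ i, h i.succ (js i)) +
            V 0 k * ∑ js : Fin n → Fin d, (∏ i, V i.succ (js i)) * (∑ i, h i.succ (js i)) ^ 2) := by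
              refine Finset.sum_congr rfl fun k _ => ?_
              rw [Finset.mul_sum, Finset.mul_sum, Finset.mul_sum, ← Finset.sum_add_distrib,
                ← Finset.sum_add_distrib]
              exact Finset.sum_congr rfl fun js _ => by ring
        _ = _ := by
              rw [i0, i1, i2, Finset.sum_add_distrib, ← Finset.sum_mul, h1]
              simp

lemma sc_chebyshev {d n : ℕ} (V g : Fin n → Fin d → ℝ) (hV0 : ∀ i k, 0 ≤ V i k)
    (hV : ∀ i, ∑ k, V i k = 1) (t : ℝ) (ht : 0 < t) (S : Finset (Fin n → Fin d))
    (hS : ∀ js ∈ S, (∀ i, 0 < V i (js i)) →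
      t ≤ |∑ i, g i (js i) - ∑ i, ∑ k, V i k * g i k|) :
    ∑ js ∈ S, ∏ i, V i (js i) ≤ (∑ i, ∑ k, V i k * g i k ^ 2) / t ^ 2 := by
  set μ : Fin n → ℝ := fun i => ∑ k, V i k * g i k with hμ
  have hm := (sc_moments n V (fun i k => g i k - μ i) hV (fun i => by
    simp only [mul_sub, Finset.sum_sub_distrib, ← Finset.sum_mul, hV]
    simp [hμ])).2
  have hvar : ∑ i, ∑ k, V i k * (g i k - μ i) ^ 2 ≤ ∑ i, ∑ k, V i k * g i k ^ 2 := by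
    refine Finset.sum_le_sum fun i _ => ?_
    have : ∑ k, V i k * (g i k - μ i) ^ 2 = ∑ k, V i k * g i k ^ 2 - μ i ^ 2 := by
      calc _ = ∑ k, (V i k * g i k ^ 2 - 2 * μ i * (V i k * g i k) + V i k * μ i ^ 2) :=
            Finset.sum_congr rfl fun k _ => by ring
        _ = ∑ k, V i k * g i k ^ 2 - 2 * μ i * μ i + 1 * μ i ^ 2 := by
            rw [Finset.sum_add_distrib, Finset.sum_sub_distrib, ← Finset.mul_sum,
              ← Finset.sum_mul, hV]
        _ = _ := by ring
    rw [this]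
    nlinarith [sq_nonneg (μ i)]
  rw [le_div_iff₀ (by positivity), Finset.sum_mul]
  refine le_trans ?_ hvar
  rw [← hm]
  refine le_trans ?_ (Finset.sum_le_sum_of_subset_of_nonneg (Finset.subset_univ S)
    (fun js _ _ => mul_nonneg (Finset.prod_nonneg fun i _ => hV0 _ _) (sq_nonneg _)))
  refine Finset.sum_le_sum fun js hjs => ?_
  by_cases hp : ∀ i, 0 < V i (js i)
  · refine mul_le_mul_of_nonneg_left ?_ (Finset.prod_nonneg fun i _ => hV0 _ _)
    rw [Finset.sum_sub_distrib, ← sq_abs (_ - _)]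
    exact pow_le_pow_left₀ ht.le (hS js hjs hp) 2
  · push Not at hp
    obtain ⟨i, hi⟩ := hp
    have : ∏ i, V i (js i) = 0 :=
      Finset.prod_eq_zero (Finset.mem_univ i) (le_antisymm hi (hV0 _ _))
    simp [this]

lemma sc_log_bound (r : ℝ) (h0 : 0 ≤ r) (h1 : r ≤ 1) :
    r * (-Real.logb 2 r) ^ 2 ≤ Kconst ^ 2 := by
  rcases h0.eq_or_lt with rfl | hr
  · simp; positivity
  set s := Real.sqrt r with hs
  have hs0 : 0 < s := Real.sqrt_pos.2 hr
  have hs1 : s ≤ 1 := Real.sqrt_le_one.2 h1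
  have hrs : r = s ^ 2 := (Real.sq_sqrt h0).symm
  have hl2 : 0 < Real.log 2 := Real.log_pos (by norm_num)
  have key : -(s * Real.log s) ≤ 1 / Real.exp 1 := by
    have := Real.log_le_sub_one_of_pos (x := 1 / (Real.exp 1 * s)) (by positivity)
    rw [Real.log_div one_ne_zero (by positivity), Real.log_one,
      Real.log_mul (Real.exp_ne_zero _) hs0.ne', Real.log_exp] at this
    have h2 : -Real.log s ≤ 1 / (Real.exp 1 * s) := by linarith
    have h3 := mul_le_mul_of_nonneg_left h2 hs0.le
    have h4 : s * (1 / (Real.exp 1 * s)) = 1 / Real.exp 1 := by field_simp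
    linarith
  have hls : Real.log s ≤ 0 := Real.log_nonpos hs0.le hs1
  have e1 : r * (-Real.logb 2 r) ^ 2 = (2 * (-(s * Real.log s)) / Real.log 2) ^ 2 := by
    rw [hrs, Real.logb, Real.log_pow]; push_cast; ring
  have e2 : Kconst = 2 * (1 / Real.exp 1) / Real.log 2 := by
    rw [Kconst, Real.logb, Real.log_exp]; ring
  rw [e1, e2]
  have : 0 ≤ -(s * Real.log s) := by nlinarith
  gcongr

lemma sc_sum_type {X : Type} [Fintype X] {n : ℕ} (xs : Fin n → X) (P : X → ℝ)
    (ht : ∀ x, (countIn x xs : ℝ) = n * P x) (φ : X → ℝ) :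
    ∑ i, φ (xs i) = n * ∑ x, P x * φ x := by
  rw [← Finset.sum_fiberwise univ xs, Finset.mul_sum]
  refine Finset.sum_congr rfl fun x _ => ?_
  rw [← mul_assoc, ← ht x, countIn, ← nsmul_eq_mul, ← Finset.sum_const]
  refine Finset.sum_congr (by ext; simp) fun i hi => ?_
  rw [(Finset.mem_filter.1 hi).2]

lemma sc_logb_prod {d n : ℕ} (r : Fin n → Fin d → ℝ) (js : Fin n → Fin d)
    (h : ∀ i, 0 < r i (js i)) :
    Real.logb 2 (∏ i, r i (js i)) = ∑ i, Real.logb 2 (r i (js i)) :=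
  Real.logb_prod _ _ (fun i _ => (h i).ne')

lemma sc_cond {X : Type} [Fintype X] {d n : ℕ} (q : X → Fin d → ℝ) (hq0 : ∀ x k, 0 ≤ q x k)
    (hq1 : ∀ x, ∑ k, q x k = 1) (xs : Fin n → X) (P : X → ℝ) (hP : IsProbDist P)
    (ht : ∀ x, (countIn x xs : ℝ) = n * P x) (t : ℝ) (ht0 : 0 < t) :
    ∑ js ∈ univ.filter (fun js : Fin n → Fin d =>
        (2 : ℝ) ^ (-(n * ∑ x, P x * -∑ k, q x k * Real.logb 2 (q x k)) + t) <
          ∏ i, q (xs i) (js i)), ∏ i, q (xs i) (js i) ≤ n * (d * Kconst ^ 2) / t ^ 2 := by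
  have hle : ∀ x k, q x k ≤ 1 := fun x k => by
    rw [← hq1 x]; exact Finset.single_le_sum (fun k _ => hq0 x k) (Finset.mem_univ k)
  refine (sc_chebyshev (fun i => q (xs i)) (fun i k => -Real.logb 2 (q (xs i) k))
    (fun i k => hq0 _ k) (fun i => hq1 _) t ht0 _ ?_).trans ?_
  · intro js hjs hpos
    have hlt := (Finset.mem_filter.1 hjs).2
    have hm := sc_sum_type xs P ht (fun x => ∑ k, q x k * -Real.logb 2 (q x k))
    rw [hm]
    have hl := Real.logb_lt_logb (b := 2) (by norm_num) (by positivity) hlt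
    rw [Real.logb_rpow (by norm_num) (by norm_num),
      sc_logb_prod (fun i => q (xs i)) js hpos] at hl
    rw [← abs_neg]
    refine le_trans ?_ (le_abs_self _)
    simp only [mul_neg, Finset.sum_neg_distrib] at hl ⊢
    linarith
  · have hm := sc_sum_type xs P ht (fun x => ∑ k, q x k * (-Real.logb 2 (q x k)) ^ 2)
    rw [hm]
    gcongr
    calc _ ≤ ∑ x, P x * (d * Kconst ^ 2) := by
          refine Finset.sum_le_sum fun x _ => mul_le_mul_of_nonneg_left ?_ (hP.1 x)
          refine (Finset.sum_le_sum fun k _ => sc_log_bound _ (hq0 x k) (hle x k)).trans ?_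
          simp
      _ = _ := by rw [← Finset.sum_mul, hP.2, one_mul]

lemma sc_avg {X : Type} [Fintype X] {d n : ℕ} (hn : 0 < n) (V : X → Fin d → ℝ)
    (hV0 : ∀ x k, 0 ≤ V x k)
    (hV1 : ∀ x, ∑ k, V x k = 1) (xs : Fin n → X) (P : X → ℝ) (hP : IsProbDist P)
    (ht : ∀ x, (countIn x xs : ℝ) = n * P x) (t : ℝ) (ht0 : 0 < t) (r : Fin d → ℝ)
    (hr : ∀ k, r k = ∑ x, P x * V x k) :
    ∑ js ∈ univ.filter (fun js : Fin n → Fin d =>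
        ∏ i, r (js i) < (2 : ℝ) ^ (-(n * -∑ k, r k * Real.logb 2 (r k)) - t)),
          ∏ i, V (xs i) (js i) ≤ n * (d * Kconst ^ 2) / t ^ 2 := by
  have hr0 : ∀ k, 0 ≤ r k := fun k => by
    rw [hr]; exact Finset.sum_nonneg fun x _ => mul_nonneg (hP.1 x) (hV0 x k)
  have hr1 : ∑ k, r k = 1 := by
    simp only [hr]
    rw [Finset.sum_comm]
    simp only [← Finset.mul_sum, hV1, mul_one, hP.2]
  have hle : ∀ k, r k ≤ 1 := fun k => by
    rw [← hr1]; exact Finset.single_le_sum (fun k _ => hr0 k) (Finset.mem_univ k)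
  have hPpos : ∀ i, 0 < P (xs i) := fun i => by
    have h1 : 0 < countIn (xs i) xs := Finset.card_pos.2 ⟨i, by simp⟩
    have h2 : (0 : ℝ) < n * P (xs i) := by rw [← ht]; exact_mod_cast h1
    exact pos_of_mul_pos_right h2 (Nat.cast_nonneg n)
  have havg : ∀ φ : Fin d → ℝ, ∑ i, ∑ k, V (xs i) k * φ k = n * ∑ k, r k * φ k := by
    intro φ
    rw [sc_sum_type xs P ht (fun x => ∑ k, V x k * φ k)]
    congr 1
    simp only [hr, Finset.mul_sum, Finset.sum_mul]
    rw [Finset.sum_comm]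
    simp only [mul_assoc]
  refine (sc_chebyshev (fun i => V (xs i)) (fun i k => -Real.logb 2 (r k))
    (fun i k => hV0 _ k) (fun i => hV1 _) t ht0 _ ?_).trans ?_
  · intro js hjs hpos
    have hlt := (Finset.mem_filter.1 hjs).2
    have hrpos : ∀ i, 0 < r (js i) := fun i => by
      rw [hr]
      exact Finset.sum_pos' (fun x _ => mul_nonneg (hP.1 x) (hV0 x _))
        ⟨xs i, Finset.mem_univ _, mul_pos (hPpos i) (hpos i)⟩
    rw [havg]
    have hl := Real.logb_lt_logb (b := 2) (by norm_num)
      (Finset.prod_pos fun i _ => hrpos i) hlt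
    rw [Real.logb_rpow (by norm_num) (by norm_num),
      sc_logb_prod (fun _ => r) js hrpos] at hl
    refine le_trans ?_ (le_abs_self _)
    simp only [mul_neg, Finset.sum_neg_distrib] at hl ⊢
    linarith
  · rw [havg (fun k => (-Real.logb 2 (r k)) ^ 2)]
    gcongr
    refine (Finset.sum_le_sum fun k _ => sc_log_bound _ (hr0 k) (hle k)).trans ?_
    simp

lemma sc_state_eig {d : ℕ} {A : Mat d} (h : IsState A) : ∑ k, h.1.1.eigenvalues k = 1 := by
  have : (1 : ℂ) = ∑ k, Complex.ofReal (h.1.1.eigenvalues k) :=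
    h.2.symm.trans h.1.1.trace_eq_sum_eigenvalues
  exact_mod_cast this.symm

lemma sc_avgState {X : Type} [Fintype X] {d : ℕ} (W : X → Mat d) (hW : ∀ x, IsState (W x))
    (P : X → ℝ) (hP : IsProbDist P) : IsState (avgState P W) := by
  constructor
  · unfold avgState
    refine Matrix.posSemidef_sum _ fun x _ => (hW x).1.smul ?_
    exact_mod_cast hP.1 x
  · unfold avgState
    rw [Matrix.trace_sum]
    simp only [Matrix.trace_smul, (hW _).2, smul_eq_mul, mul_one]
    exact_mod_cast hP.2

/-- **Theorem 3, refined form (Strong converse for constant composition codes).**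
Every `(n,λ)`-code all of whose codewords have the same type `P` satisfies
`|M| ≤ (4/(1−λ)) exp₂(n I(P;W) + 2Kd√a δ√n)` with `δ = √(32ad)/(1−λ)` and
`K = 2 log₂(e)/e`. -/
theorem strong_converse_constant_composition {X : Type} [Fintype X] {d : ℕ}
    (W : X → Mat d) (hW : ∀ x, IsState (W x))
    (lam : ℝ) (hlam : lam ∈ Set.Ioo (0 : ℝ) 1)
    (n : ℕ) (hn : 0 < n) (M' : Type) [Fintype M'] (M : Finset M')
    (f : M' → Fin n → X) (D : M' → MatPow d n) (hcode : IsCode W lam M f D)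
    (P : X → ℝ) (hP : IsProbDist P)
    (htype : ∀ m ∈ M, ∀ x, (countIn x (f m) : ℝ) = n * P x) :
    (M.card : ℝ) ≤ 4 / (1 - lam) *
      exp2 ((n : ℝ) * mutualInfo P W +
        2 * Kconst * d * Real.sqrt (Fintype.card X) *
          (Real.sqrt (32 * (Fintype.card X) * d) / (1 - lam)) * Real.sqrt n) := by
  obtain ⟨hDpos, hDsum, hDdec⟩ := hcode
  obtain ⟨hl0, hl1⟩ := hlam
  have hA := sc_avgState W hW P hP
  -- nonemptiness
  have hXne : Nonempty X := by
    by_contra h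
    rw [not_nonempty_iff] at h
    have := hP.2
    simp at this
  have ha1 : (1 : ℝ) ≤ Fintype.card X := by
    exact_mod_cast Fintype.card_pos
  have hd0 : 0 < d := by
    rcases Nat.eq_zero_or_pos d with rfl | h
    · have := hA.2
      simp [Matrix.trace] at this
    · exact h
  have hd1 : (1 : ℝ) ≤ d := by exact_mod_cast hd0
  have hnR : (0 : ℝ) < n := by exact_mod_cast hn
  have hK : 0 < Kconst := by
    have : 0 < Real.logb 2 (Real.exp 1) :=
      Real.logb_pos (by norm_num) (by rw [Real.one_lt_exp_iff]; norm_num)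
    unfold Kconst; positivity
  have hg : 0 < 1 - lam := by linarith
  set a : ℝ := (Fintype.card X : ℝ) with ha
  set t : ℝ := Kconst * d * Real.sqrt a * (Real.sqrt (32 * a * d) / (1 - lam)) * Real.sqrt n
    with ht
  have ht0 : 0 < t := by
    have : 0 < a := by linarith
    have : (0 : ℝ) < d := by linarith
    positivity
  have hε : n * (d * Kconst ^ 2) / t ^ 2 ≤ (1 - lam) / 32 := by
    have e : t ^ 2 = n * (d * Kconst ^ 2) * (32 * (a * d) ^ 2 / (1 - lam) ^ 2) := by
      rw [ht]
      simp only [mul_pow, div_pow]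
      rw [Real.sq_sqrt (by positivity), Real.sq_sqrt (by positivity),
        Real.sq_sqrt (by positivity)]
      ring
    have hpos : (0 : ℝ) < n * (d * Kconst ^ 2) := by positivity
    rw [e, div_le_iff₀ (by rw [← e]; positivity)]
    have h1 : 1 ≤ (a * d) ^ 2 := one_le_pow₀ (one_le_mul_of_one_le_of_one_le ha1 hd1)
    have h2 : 1 ≤ (1 - lam) / 32 * (32 * (a * d) ^ 2 / (1 - lam) ^ 2) := by
      have : (1 - lam) / 32 * (32 * (a * d) ^ 2 / (1 - lam) ^ 2) = (a * d) ^ 2 / (1 - lam) := by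
        field_simp
      rw [this, le_div_iff₀ hg]
      linarith
    nlinarith
  set ε : ℝ := n * (d * Kconst ^ 2) / t ^ 2 with hεdef
  -- diagonalizations
  obtain ⟨U, hU1, hU2, hUd⟩ := sc_diagonalize hA.1.1
  choose F hF1 hF2 hFd using fun x => sc_diagonalize (hW x).1.1
  set r : Fin d → ℝ := hA.1.1.eigenvalues with hrdef
  have hr0 : ∀ k, 0 ≤ r k := fun k => hA.1.eigenvalues_nonneg k
  have hr1 : ∑ k, r k = 1 := sc_state_eig hA
  set q : X → Fin d → ℝ := fun x => (hW x).1.1.eigenvalues with hqdef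
  have hq0 : ∀ x k, 0 ≤ q x k := fun x k => (hW x).1.eigenvalues_nonneg k
  have hq1 : ∀ x, ∑ k, q x k = 1 := fun x => sc_state_eig (hW x)
  have hHavg : vnEntropy (avgState P W) = -∑ k, r k * Real.logb 2 (r k) := by
    rw [vnEntropy, dif_pos hA.1.1]
  have hHcond : condEntropy P W = ∑ x, P x * -∑ k, q x k * Real.logb 2 (q x k) := by
    unfold condEntropy
    refine Finset.sum_congr rfl fun x _ => ?_
    rw [vnEntropy, dif_pos (hW x).1.1]
  set V : X → Fin d → ℝ := fun x k => ((Uᴴ * W x * U) k k).re with hV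
  have hVpsd : ∀ x, (Uᴴ * W x * U).PosSemidef := fun x =>
    (hW x).1.conjTranspose_mul_mul_same U
  have hV0 : ∀ x k, 0 ≤ V x k := fun x k => (Complex.le_def.1 (hVpsd x).diag_nonneg).1
  have hVc : ∀ x k, (Uᴴ * W x * U) k k = (V x k : ℂ) := fun x k => by
    have := (Complex.le_def.1 ((hVpsd x).diag_nonneg (i := k))).2
    apply Complex.ext
    · simp [hV]
    · simpa using this.symm
  have hV1 : ∀ x, ∑ k, V x k = 1 := fun x => by
    have : (Uᴴ * W x * U).trace = 1 := by
      rw [Matrix.trace_mul_comm, ← Matrix.mul_assoc, hU1, Matrix.one_mul, (hW x).2]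
    rw [Matrix.trace] at this
    simp only [Matrix.diag_apply, hVc] at this
    exact_mod_cast this
  have hrV : ∀ k, r k = ∑ x, P x * V x k := fun k => by
    have h1 : Uᴴ * avgState P W * U = diagonal (fun i => (r i : ℂ)) := by
      rw [hUd]
      calc _ = (Uᴴ * U) * diagonal (fun i => (r i : ℂ)) * (Uᴴ * U) := by
            simp only [Matrix.mul_assoc]
        _ = _ := by rw [hU2, Matrix.one_mul, Matrix.mul_one]
    have h2 : (Uᴴ * avgState P W * U) k k = ∑ x, (P x : ℂ) * (V x k : ℂ) := by
      unfold avgState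
      rw [Matrix.mul_sum, Matrix.sum_mul, Matrix.sum_apply]
      refine Finset.sum_congr rfl fun x _ => ?_
      rw [Matrix.mul_smul, Matrix.smul_mul, Matrix.smul_apply, hVc, smul_eq_mul]
    rw [h1, Matrix.diagonal_apply_eq] at h2
    exact_mod_cast h2
  -- the typical projector of the average state
  set θ : ℝ := (2 : ℝ) ^ (-(n * -∑ k, r k * Real.logb 2 (r k)) - t) with hθ
  have hθ0 : 0 < θ := by positivity
  set E : MatPow d n := tensorPow (fun _ => U) with hE
  have hE1 : E * Eᴴ = 1 := by
    rw [hE, sc_tensor_conj, sc_tensor_mul]; simp only [hU1]; exact sc_tensor_one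
  have hE2 : Eᴴ * E = 1 := by
    rw [hE, sc_tensor_conj, sc_tensor_mul]; simp only [hU2]; exact sc_tensor_one
  set χ : (Fin n → Fin d) → ℂ := fun js => if ∏ i, r (js i) < θ then 0 else 1 with hχ
  set T : MatPow d n := E * diagonal χ * Eᴴ with hT
  have hTH : Tᴴ = T := by
    rw [hT, Matrix.conjTranspose_mul, Matrix.conjTranspose_mul, Matrix.conjTranspose_conjTranspose,
      Matrix.diagonal_conjTranspose, Matrix.mul_assoc]
    have : star χ = χ := by
      funext js
      simp only [Pi.star_apply, hχ]
      split_ifs <;> simp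
    rw [this]
  have hTT : T * T = T := by
    calc T * T = E * (diagonal χ * (Eᴴ * E) * diagonal χ) * Eᴴ := by
          rw [hT]; simp only [Matrix.mul_assoc]
      _ = T := by
          rw [hE2, Matrix.mul_one, Matrix.diagonal_mul_diagonal, hT]
          congr 3
          funext js
          simp only [hχ]
          split_ifs <;> simp
  have hTtr : T.trace.re ≤ θ⁻¹ := by
    have h1 : T.trace = ∑ js, χ js := by
      rw [hT, Matrix.trace_mul_comm, ← Matrix.mul_assoc, hE2, Matrix.one_mul,
        Matrix.trace_diagonal]
    have h2 : ∑ js : Fin n → Fin d, ∏ i, r (js i) = 1 := sc_sum_one (fun _ => r) (fun _ => hr1)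
    rw [h1, Complex.re_sum]
    calc ∑ js, (χ js).re ≤ ∑ js : Fin n → Fin d, (∏ i, r (js i)) * θ⁻¹ := by
          refine Finset.sum_le_sum fun js _ => ?_
          simp only [hχ]
          split_ifs with h
          · simp only [Complex.zero_re]
            exact mul_nonneg (Finset.prod_nonneg fun i _ => hr0 _) (inv_nonneg.2 hθ0.le)
          · push Not at h
            rw [Complex.one_re, ← div_eq_mul_inv, le_div_iff₀ hθ0, one_mul]
            exact h
      _ = θ⁻¹ := by rw [← Finset.sum_mul, h2, one_mul]
  set c : ℝ := (2 : ℝ) ^ (-(n * ∑ x, P x * -∑ k, q x k * Real.logb 2 (q x k)) + t) with hc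
  have hc0 : 0 < c := by positivity
  have hD1 : ∀ m, (1 - D m).PosSemidef := fun m => by
    rw [← hDsum, ← Finset.add_sum_erase _ _ (Finset.mem_univ m), add_sub_cancel_left]
    exact Matrix.posSemidef_sum _ fun m' _ => hDpos m'
  have hBpos : ∀ m, (T * D m * T).PosSemidef := fun m => by
    have := (hDpos m).mul_mul_conjTranspose_same T
    rwa [hTH] at this
  have hBtr0 : ∀ m, 0 ≤ (T * D m * T).trace.re := fun m =>
    (Complex.le_def.1 (hBpos m).trace_nonneg).1
  -- bound for each message
  have hmain : ∀ m ∈ M, (1 - lam) / 4 ≤ c * (T * D m * T).trace.re := by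
    intro m hm
    set xs := f m with hxs
    set R : MatPow d n := tensorPow (fun i => W (xs i)) with hR
    set G : MatPow d n := tensorPow (fun i => F (xs i)) with hG
    have hG1 : G * Gᴴ = 1 := by
      rw [hG, sc_tensor_conj, sc_tensor_mul]; simp only [hF1]; exact sc_tensor_one
    have hG2 : Gᴴ * G = 1 := by
      rw [hG, sc_tensor_conj, sc_tensor_mul]; simp only [hF2]; exact sc_tensor_one
    have hRd : R = G * diagonal (fun js => ((∏ i, q (xs i) (js i) : ℝ) : ℂ)) * Gᴴ := by
      have e : diagonal (fun js : Fin n → Fin d => ((∏ i, q (xs i) (js i) : ℝ) : ℂ)) =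
          tensorPow (fun i => diagonal (fun k => (q (xs i) k : ℂ))) := by
        rw [sc_tensor_diag]; push_cast; rfl
      rw [e, hG, sc_tensor_conj, sc_tensor_mul, sc_tensor_mul, hR]
      congr 1
      funext i
      exact hFd (xs i)
    have hqprod : ∀ js : Fin n → Fin d, 0 ≤ ∏ i, q (xs i) (js i) := fun js =>
      Finset.prod_nonneg fun i _ => hq0 _ _
    have hRpos : R.PosSemidef := by
      rw [hRd]
      refine Matrix.PosSemidef.mul_mul_conjTranspose_same ?_ G
      refine Matrix.PosSemidef.diagonal fun js => ?_
      exact Complex.zero_le_real.2 (hqprod js)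
    have hpin := sc_pinch hRpos hTH hTT (hDpos m) (hD1 m)
    have hdec := hDdec m hm
    have hsh := sc_shadow (B := T * D m * T) (fun js : Fin n → Fin d => ∏ i, q (xs i) (js i))
      hG1 hG2 hqprod (hBpos m) (sc_compress_le_one hTH hTT (hD1 m)) c hc0.le
    rw [← hRd] at hsh
    have hbad1 := sc_cond q hq0 hq1 xs P hP (htype m hm) t ht0
    rw [← hc] at hbad1
    have hbad2 := sc_avg hn V hV0 hV1 xs P hP (htype m hm) t ht0 r hrV
    rw [← hθ] at hbad2
    have hRT : (R * (1 - T)).trace.re = ∑ js ∈ univ.filter (fun js : Fin n → Fin d =>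
        ∏ i, r (js i) < θ), ∏ i, V (xs i) (js i) := by
      have e1 : 1 - T = E * diagonal (fun js => 1 - χ js) * Eᴴ := by
        have : diagonal (fun js => 1 - χ js) = 1 - diagonal χ := by
          rw [← Matrix.diagonal_one, Matrix.diagonal_sub]
        rw [this, Matrix.mul_sub, Matrix.sub_mul, Matrix.mul_one, hE1]
      have e2 : Eᴴ * R * E = tensorPow (fun i => Uᴴ * W (xs i) * U) := by
        rw [hE, hR, sc_tensor_conj, sc_tensor_mul, sc_tensor_mul]
      rw [Matrix.trace_mul_comm, e1, sc_trace_diag, e2, Complex.re_sum, Finset.sum_filter]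
      refine Finset.sum_congr rfl fun js _ => ?_
      have e3 : tensorPow (fun i => Uᴴ * W (xs i) * U) js js =
          ((∏ i, V (xs i) (js i) : ℝ) : ℂ) := by
        simp only [tensorPow, Matrix.of_apply, hVc]; push_cast; rfl
      rw [e3]
      simp only [hχ]
      split_ifs
      · simp only [sub_zero, one_mul, Complex.ofReal_re]
      · simp
    rw [hRT] at hpin
    linarith
  -- summation
  have hsum : ∑ m ∈ M, (T * D m * T).trace.re ≤ θ⁻¹ := by
    calc _ ≤ ∑ m, (T * D m * T).trace.re :=
          Finset.sum_le_sum_of_subset_of_nonneg (Finset.subset_univ M) (fun m _ _ => hBtr0 m)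
      _ = T.trace.re := by
          rw [← Complex.re_sum, ← Matrix.trace_sum, ← Matrix.sum_mul, ← Matrix.mul_sum, hDsum,
            Matrix.mul_one, hTT]
      _ ≤ _ := hTtr
  have hcard : (M.card : ℝ) * ((1 - lam) / 4) ≤ c * θ⁻¹ := by
    calc _ = ∑ m ∈ M, (1 - lam) / 4 := by rw [Finset.sum_const, nsmul_eq_mul]
      _ ≤ ∑ m ∈ M, c * (T * D m * T).trace.re := Finset.sum_le_sum hmain
      _ ≤ _ := by rw [← Finset.mul_sum]; exact mul_le_mul_of_nonneg_left hsum hc0.le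
  have hfin : c * θ⁻¹ = exp2 ((n : ℝ) * mutualInfo P W + 2 * Kconst * d * Real.sqrt a *
      (Real.sqrt (32 * a * d) / (1 - lam)) * Real.sqrt n) := by
    rw [exp2, mutualInfo, hHavg, hHcond, hc, hθ, ← Real.rpow_neg (by norm_num),
      ← Real.rpow_add (by norm_num)]
    congr 1
    rw [ht]
    ring
  rw [← hfin, div_mul_eq_mul_div, le_div_iff₀ hg]
  linarith
end
end

section
/- (Holevo bound) Let W be a classical–quantum channel from a finite alphabet X into the density operators on ℂ^d, P a probability distribution on X, and D = (D_y)_{y∈Y} a POVM on ℂ^d indexed by a finite set Y (positive semidefinite operators summing to the identity). Define the classical channel Q : X → probability distributions on Y by Q(y|x) = Tr(W_x D_y). Then the classical mutual information satisfies I(P;Q) ≤ I(P;W), where I(P;Q) = H(PQ) − Σ_x P(x)H(Q(·|x)) with Shannon entropies and (PQ)(y) = Σ_x P(x)Q(y|x), and I(P;W) = H(PW) − Σ_x P(x)H(W_x) with von Neumann entropies and PW = Σ_x P(x)W_x. -/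
open Matrix BigOperators Finset
open scoped Classical ComplexOrder

noncomputable section

/-- The auxiliary function `∑ c log (p + t q)`. -/
def hbF {I : Type*} [Fintype I] (c p q : I → ℝ) (t : ℝ) : ℝ := ∑ i, c i * Real.log (p i + t * q i)

lemma hbF_deriv {I : Type*} [Fintype I] (c p q : I → ℝ)
    (hc : ∀ i, c i ≠ 0 → 0 < p i ∧ 0 < q i) {t : ℝ} (ht : 0 ≤ t) :
    HasDerivAt (hbF c p q) (∑ i, c i * q i / (p i + t * q i)) t := by
  have : hbF c p q = fun t => ∑ i, c i * Real.log (p i + t * q i) := rfl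
  rw [this]
  apply HasDerivAt.fun_sum
  intro i _
  by_cases h : c i = 0
  · simpa [h] using hasDerivAt_const t (0 : ℝ)
  · obtain ⟨hp, hq⟩ := hc i h
    have hpos : p i + t * q i ≠ 0 := by positivity
    have h1 : HasDerivAt (fun t => p i + t * q i) (q i) t := by
      simpa using ((hasDerivAt_id t).mul_const (q i)).const_add (p i)
    have h2 := (h1.log hpos).const_mul (c i)
    rwa [mul_div_assoc]

lemma hbF_tendsto {I : Type*} [Fintype I] (c p q : I → ℝ)
    (hc : ∀ i, c i ≠ 0 → 0 < p i ∧ 0 < q i) :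
    Filter.Tendsto (fun t => hbF c p q t - (∑ i, c i) * Real.log t) Filter.atTop
      (nhds (∑ i, c i * Real.log (q i))) := by
  have : (fun t => hbF c p q t - (∑ i, c i) * Real.log t) =
      fun t => ∑ i, c i * (Real.log (p i + t * q i) - Real.log t) := by
    funext t
    simp [hbF, Finset.sum_mul, mul_sub]
  rw [this]
  apply tendsto_finsetSum
  intro i _
  by_cases h : c i = 0
  · simp [h]
  · obtain ⟨hp, hq⟩ := hc i h
    apply Filter.Tendsto.const_mul
    have h1 : Filter.Tendsto (fun t : ℝ => p i / t + q i) Filter.atTop (nhds (0 + q i)) :=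
      (Filter.Tendsto.const_div_atTop Filter.tendsto_id (p i)).add_const _
    rw [zero_add] at h1
    refine ((Real.continuousAt_log hq.ne').tendsto.comp h1).congr' ?_
    filter_upwards [Filter.eventually_gt_atTop 0] with t ht
    rw [← Real.log_div (by positivity) ht.ne']
    simp only [Function.comp]
    congr 1
    field_simp

lemma hb_classical {I Y : Type*} [Fintype I] [Fintype Y] (c p q : I → ℝ) (a b : Y → ℝ)
    (hc : ∀ i, c i ≠ 0 → 0 < p i ∧ 0 < q i) (ha : ∀ y, a y ≠ 0 → 0 < a y ∧ 0 < b y)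
    (hsum : ∑ i, c i = ∑ y, a y)
    (h : ∀ t : ℝ, 0 < t → ∑ i, c i * q i / (p i + t * q i) ≤ ∑ y, a y * b y / (a y + t * b y)) :
    ∑ y, a y * Real.log (a y) - ∑ y, a y * Real.log (b y)
      ≤ ∑ i, c i * Real.log (p i) - ∑ i, c i * Real.log (q i) := by
  have hd : ∀ t : ℝ, 0 ≤ t → HasDerivAt (fun t => hbF c p q t - hbF a a b t)
      (∑ i, c i * q i / (p i + t * q i) - ∑ y, a y * b y / (a y + t * b y)) t :=
    fun t ht => (hbF_deriv c p q hc ht).sub (hbF_deriv a a b ha ht)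
  have hanti : AntitoneOn (fun t => hbF c p q t - hbF a a b t) (Set.Ici 0) := by
    apply antitoneOn_of_deriv_nonpos (convex_Ici 0)
    · intro t ht
      exact (hd t ht).continuousAt.continuousWithinAt
    · intro t ht
      rw [interior_Ici] at ht
      exact (hd t (le_of_lt ht)).differentiableAt.differentiableWithinAt
    · intro t ht
      rw [interior_Ici] at ht
      rw [(hd t (le_of_lt ht)).deriv]
      linarith [h t ht]
  have hlim := (hbF_tendsto c p q hc).sub (hbF_tendsto a a b ha)
  have hle : ∑ i, c i * Real.log (q i) - ∑ y, a y * Real.log (b y) ≤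
      hbF c p q 0 - hbF a a b 0 := by
    refine le_of_tendsto hlim ?_
    filter_upwards [Filter.eventually_ge_atTop 0] with t ht
    have := hanti (Set.mem_Ici.2 le_rfl) (Set.mem_Ici.2 ht) ht
    simp only at this
    rw [hsum]
    linarith
  simp only [hbF, zero_mul, add_zero] at hle
  linarith

/-- Trace of a spectral decomposition against a matrix. -/
lemma hb_spec {d : ℕ} (ρ : Mat d) (hρ : ρ.IsHermitian) :
    ∃ U : Mat d, Uᴴ * U = 1 ∧ U * Uᴴ = 1 ∧
      ρ = U * diagonal (fun i => ((hρ.eigenvalues i : ℝ) : ℂ)) * Uᴴ := by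
  refine ⟨hρ.eigenvectorUnitary, ?_, ?_, ?_⟩
  · exact Unitary.coe_star_mul_self hρ.eigenvectorUnitary
  · exact Unitary.coe_mul_star_self hρ.eigenvectorUnitary
  · exact hρ.spectral_theorem

lemma hb_trace_diag {d : ℕ} (U M : Mat d) (p : Fin d → ℝ) :
    (trace (U * diagonal (fun i => (p i : ℂ)) * Uᴴ * M)).re =
      ∑ i, p i * ((Uᴴ * M * U) i i).re := by
  have : trace (U * diagonal (fun i => (p i : ℂ)) * Uᴴ * M) =
      trace (diagonal (fun i => (p i : ℂ)) * (Uᴴ * M * U)) := by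
    rw [Matrix.mul_assoc, Matrix.mul_assoc, trace_mul_comm]
    simp only [Matrix.mul_assoc]
  rw [this]
  simp [trace, diagonal_mul]

lemma hb_diag_nonneg {d : ℕ} {M : Mat d} (hM : M.PosSemidef) (i : Fin d) : 0 ≤ (M i i).re :=
  (Complex.nonneg_iff.1 hM.diag_nonneg).1

lemma hb_trace_nonneg {d : ℕ} {ρ M : Mat d} (hρ : ρ.PosSemidef) (hM : M.PosSemidef) :
    0 ≤ (trace (ρ * M)).re := by
  obtain ⟨U, -, -, hU⟩ := hb_spec ρ hρ.1
  rw [hU, hb_trace_diag]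
  exact Finset.sum_nonneg fun i _ => mul_nonneg (hρ.eigenvalues_nonneg i)
    (hb_diag_nonneg (hM.conjTranspose_mul_mul_same U) i)

lemma hb_row {d : ℕ} (M : Mat d) (i : Fin d) :
    ((M * Mᴴ) i i).re = ∑ j, Complex.normSq (M i j) := by
  simp [Matrix.mul_apply, Complex.mul_conj]

lemma hb_col {d : ℕ} (M : Mat d) (j : Fin d) :
    ((Mᴴ * M) j j).re = ∑ i, Complex.normSq (M i j) := by
  simp [Matrix.mul_apply, mul_comm, Complex.mul_conj]

/-- Kadison-type inequality for a POVM. -/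
lemma hb_kadison {d : ℕ} {Y : Type*} [Fintype Y] (D : Y → Mat d) (hD : ∀ y, (D y).PosSemidef)
    (hDsum : ∑ y, D y = 1) (z : Y → ℝ) {ρ : Mat d} (hρ : ρ.PosSemidef) :
    (trace (ρ * ((∑ y, (z y : ℂ) • D y) * (∑ y, (z y : ℂ) • D y)))).re ≤
      ∑ y, z y ^ 2 * (trace (ρ * D y)).re := by
  set Z : Mat d := ∑ y, (z y : ℂ) • D y with hZ
  have hZh : Zᴴ = Z := by
    rw [hZ, conjTranspose_sum]
    refine Finset.sum_congr rfl fun y _ => ?_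
    rw [conjTranspose_smul, (hD y).1.eq]
    simp
  have key : ∑ y, ((z y : ℂ) • (1 : Mat d) - Z) * D y * ((z y : ℂ) • (1 : Mat d) - Z)ᴴ =
      ∑ y, ((z y : ℂ) ^ 2) • D y - Z * Z := by
    have h1 : ∀ y, ((z y : ℂ) • (1 : Mat d) - Z) * D y * ((z y : ℂ) • (1 : Mat d) - Z)ᴴ =
        ((z y : ℂ) ^ 2) • D y - ((z y : ℂ) • D y) * Z - Z * ((z y : ℂ) • D y) + Z * D y * Z := by
      intro y
      rw [conjTranspose_sub, hZh, conjTranspose_smul, conjTranspose_one]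
      simp only [sub_mul, mul_sub, Matrix.smul_mul, Matrix.mul_smul, Matrix.one_mul,
        Matrix.mul_one, smul_sub, smul_smul, pow_two, Complex.star_def, Complex.conj_ofReal]
      abel
    simp only [h1, Finset.sum_add_distrib, Finset.sum_sub_distrib, ← Finset.sum_mul,
      ← Finset.mul_sum, hDsum, ← hZ]
    simp
  have h2 : (∑ y, ((z y : ℂ) ^ 2) • D y - Z * Z).PosSemidef := by
    rw [← key]
    exact posSemidef_sum _ fun y _ => (hD y).mul_mul_conjTranspose_same _
  have h3 := hb_trace_nonneg hρ h2
  rw [mul_sub, trace_sub, Complex.sub_re, Finset.mul_sum, trace_sum, Complex.re_sum] at h3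
  have h4 : ∀ y, (trace (ρ * ((z y : ℂ) ^ 2 • D y))).re = z y ^ 2 * (trace (ρ * D y)).re := by
    intro y
    rw [Matrix.mul_smul, trace_smul, smul_eq_mul, ← Complex.ofReal_pow, Complex.re_ofReal_mul]
  simp only [h4] at h3
  linarith

lemma hb_scalar (p q t : ℝ) (hp : 0 ≤ p) (hq : 0 ≤ q) (ht : 0 < t) (u x : ℂ) :
    t * (Complex.normSq u * p * q / (p + t * q)) ≤
      p * Complex.normSq (u - x) + t * (q * Complex.normSq x) := by
  rcases (show 0 ≤ p + t * q by positivity).eq_or_lt with h | h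
  · rw [← h]
    simp only [div_zero, mul_zero]
    have := Complex.normSq_nonneg (u - x)
    have := Complex.normSq_nonneg x
    positivity
  · rw [← mul_div_assoc, div_le_iff₀ h]
    simp only [Complex.normSq_apply, Complex.sub_re, Complex.sub_im]
    nlinarith [sq_nonneg (p * (u.re - x.re) - t * q * x.re),
      sq_nonneg (p * (u.im - x.im) - t * q * x.im)]

lemma hb_key {d : ℕ} {Y : Type*} [Fintype Y] (D : Y → Mat d) (hD : ∀ y, (D y).PosSemidef)
    (hDsum : ∑ y, D y = 1) (U V : Mat d) (hU : U * Uᴴ = 1) (hV : V * Vᴴ = 1) (p q : Fin d → ℝ)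
    (hp : ∀ i, 0 ≤ p i) (hq : ∀ i, 0 ≤ q i) (ρ σ : Mat d)
    (hρ : ρ.PosSemidef) (hσ : σ.PosSemidef)
    (hρU : ρ = U * diagonal (fun i => (p i : ℂ)) * Uᴴ)
    (hσV : σ = V * diagonal (fun i => (q i : ℂ)) * Vᴴ) (t : ℝ) (ht : 0 < t) :
    ∑ ij : Fin d × Fin d, Complex.normSq ((Uᴴ * V) ij.1 ij.2) * p ij.1 * q ij.2
        / (p ij.1 + t * q ij.2) ≤
      ∑ y, (trace (ρ * D y)).re * (trace (σ * D y)).re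
        / ((trace (ρ * D y)).re + t * (trace (σ * D y)).re) := by
  have ha : ∀ y, 0 ≤ (trace (ρ * D y)).re := fun y => hb_trace_nonneg hρ (hD y)
  have hb : ∀ y, 0 ≤ (trace (σ * D y)).re := fun y => hb_trace_nonneg hσ (hD y)
  set a : Y → ℝ := fun y => (trace (ρ * D y)).re with hadef
  set b : Y → ℝ := fun y => (trace (σ * D y)).re with hbdef
  set x : Y → ℝ := fun y => a y / (a y + t * b y) with hx
  set Z : Mat d := ∑ y, (x y : ℂ) • D y with hZ
  have hZh : Zᴴ = Z := by
    rw [hZ, conjTranspose_sum]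
    refine Finset.sum_congr rfl fun y _ => ?_
    rw [conjTranspose_smul, (hD y).1.eq]
    simp
  have hZ1 : ∑ y, (((1 - x y : ℝ)) : ℂ) • D y = 1 - Z := by
    simp [sub_smul, Finset.sum_sub_distrib, hDsum, hZ]
  have k1 := hb_kadison D hD hDsum (fun y => 1 - x y) hρ
  have k2 := hb_kadison D hD hDsum x hσ
  rw [hZ1] at k1
  rw [← hZ] at k2
  have e1 : (trace (ρ * ((1 - Z) * (1 - Z)))).re =
      ∑ ij : Fin d × Fin d, p ij.1 * Complex.normSq ((Uᴴ * V) ij.1 ij.2 - (Uᴴ * Z * V) ij.1 ij.2) := by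
    rw [hρU, hb_trace_diag, Fintype.sum_prod_type]
    refine Finset.sum_congr rfl fun i _ => ?_
    have : Uᴴ * ((1 - Z) * (1 - Z)) * U = (Uᴴ * V - Uᴴ * Z * V) * (Uᴴ * V - Uᴴ * Z * V)ᴴ := by
      have h1 : Uᴴ * V - Uᴴ * Z * V = Uᴴ * (1 - Z) * V := by noncomm_ring
      rw [h1]
      simp only [conjTranspose_mul, conjTranspose_conjTranspose, conjTranspose_sub,
        conjTranspose_one, hZh]
      calc _ = Uᴴ * (1 - Z) * 1 * ((1 - Z) * U) := by noncomm_ring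
        _ = _ := by rw [← hV]; noncomm_ring
    rw [this, hb_row, Finset.mul_sum]
    simp
  have e2 : (trace (σ * (Z * Z))).re =
      ∑ ij : Fin d × Fin d, q ij.2 * Complex.normSq ((Uᴴ * Z * V) ij.1 ij.2) := by
    rw [hσV, hb_trace_diag, Fintype.sum_prod_type_right]
    refine Finset.sum_congr rfl fun i _ => ?_
    have : Vᴴ * (Z * Z) * V = (Uᴴ * Z * V)ᴴ * (Uᴴ * Z * V) := by
      simp only [conjTranspose_mul, conjTranspose_conjTranspose, hZh]
      calc _ = Vᴴ * Z * 1 * (Z * V) := by noncomm_ring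
        _ = _ := by rw [← hU]; noncomm_ring
    rw [this, hb_col, Finset.mul_sum]
  have e3 : ∀ y, (1 - x y) ^ 2 * a y + t * (x y ^ 2 * b y) = t * (a y * b y / (a y + t * b y)) := by
    intro y
    have h1 : 0 ≤ a y := ha y
    have h2 : 0 ≤ b y := hb y
    rcases (show 0 ≤ a y + t * b y by positivity).eq_or_lt with h | h
    · have h3 : a y = 0 := by nlinarith
      simp [hx, h3]
    · simp only [hx]
      field_simp
      ring
  have hmain : t * ∑ ij : Fin d × Fin d, Complex.normSq ((Uᴴ * V) ij.1 ij.2) * p ij.1 * q ij.2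
        / (p ij.1 + t * q ij.2) ≤ t * ∑ y, a y * b y / (a y + t * b y) := by
    calc _ ≤ (trace (ρ * ((1 - Z) * (1 - Z)))).re + t * (trace (σ * (Z * Z))).re := by
          rw [e1, e2]
          clear_value Z
          rw [Finset.mul_sum, Finset.mul_sum, ← Finset.sum_add_distrib]
          exact Finset.sum_le_sum fun ij _ => hb_scalar _ _ _ (hp _) (hq _) ht _ _
      _ ≤ ∑ y, (1 - x y) ^ 2 * a y + t * ∑ y, x y ^ 2 * b y :=
          add_le_add k1 (mul_le_mul_of_nonneg_left k2 ht.le)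
      _ = _ := by
          rw [Finset.mul_sum, Finset.mul_sum, ← Finset.sum_add_distrib]
          exact Finset.sum_congr rfl fun y _ => e3 y
  exact le_of_mul_le_mul_left hmain ht

/-- Monotonicity of relative entropy under a measurement. -/
lemma hb_mono {d : ℕ} {Y : Type*} [Fintype Y] (D : Y → Mat d) (hD : ∀ y, (D y).PosSemidef)
    (hDsum : ∑ y, D y = 1) (V : Mat d) (hV' : Vᴴ * V = 1) (hV : V * Vᴴ = 1) (q : Fin d → ℝ)
    (hq : ∀ i, 0 ≤ q i) (ρ σ : Mat d)
    (hρ : ρ.PosSemidef) (hσ : σ.PosSemidef)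
    (hσV : σ = V * diagonal (fun i => (q i : ℂ)) * Vᴴ) (r : ℝ) (hr : 0 < r)
    (hdom : (σ - (r : ℂ) • ρ).PosSemidef) :
    ∑ y, (trace (ρ * D y)).re * Real.log (trace (ρ * D y)).re -
        ∑ y, (trace (ρ * D y)).re * Real.log (trace (σ * D y)).re ≤
      ∑ i, hρ.1.eigenvalues i * Real.log (hρ.1.eigenvalues i) -
        ∑ j, ((Vᴴ * ρ * V) j j).re * Real.log (q j) := by
  obtain ⟨U, hU', hU, hρU⟩ := hb_spec ρ hρ.1
  set p := hρ.1.eigenvalues with hpdef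
  have hp : ∀ i, 0 ≤ p i := hρ.eigenvalues_nonneg
  have ha : ∀ y, 0 ≤ (trace (ρ * D y)).re := fun y => hb_trace_nonneg hρ (hD y)
  have hcol : ∀ j, ((Vᴴ * ρ * V) j j).re = ∑ i, Complex.normSq ((Uᴴ * V) i j) * p i := by
    intro j
    have : Vᴴ * ρ * V = (Uᴴ * V)ᴴ * (diagonal (fun i => (p i : ℂ)) * (Uᴴ * V)) := by
      rw [hρU]
      simp only [conjTranspose_mul, conjTranspose_conjTranspose, Matrix.mul_assoc]
    rw [this, Matrix.mul_apply, Complex.re_sum]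
    refine Finset.sum_congr rfl fun i _ => ?_
    rw [diagonal_mul, conjTranspose_apply, Complex.normSq_apply]
    simp
    ring
  have hrow : ∀ i, ∑ j, Complex.normSq ((Uᴴ * V) i j) = 1 := by
    intro i
    have h1 : (Uᴴ * V) * (Uᴴ * V)ᴴ = 1 := by
      simp only [conjTranspose_mul, conjTranspose_conjTranspose]
      calc _ = Uᴴ * (V * Vᴴ) * U := by noncomm_ring
        _ = _ := by rw [hV, Matrix.mul_one, hU']
    rw [← hb_row, h1]
    simp
  have hdiagσ : Vᴴ * σ * V = diagonal (fun i => (q i : ℂ)) := by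
    rw [hσV]
    calc _ = (Vᴴ * V) * diagonal (fun i => (q i : ℂ)) * (Vᴴ * V) := by noncomm_ring
      _ = _ := by rw [hV']; simp
  have hdomq : ∀ j, r * ((Vᴴ * ρ * V) j j).re ≤ q j := by
    intro j
    have h1 := hb_diag_nonneg (hdom.conjTranspose_mul_mul_same V) j
    rw [mul_sub, sub_mul, hdiagσ, Matrix.mul_smul, Matrix.smul_mul] at h1
    simp only [Matrix.sub_apply, diagonal_apply_eq, Matrix.smul_apply, smul_eq_mul, Complex.sub_re,
      Complex.ofReal_re, Complex.re_ofReal_mul] at h1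
    linarith
  have hdomb : ∀ y, r * (trace (ρ * D y)).re ≤ (trace (σ * D y)).re := by
    intro y
    have h1 := hb_trace_nonneg hdom (hD y)
    rw [sub_mul, trace_sub, Matrix.smul_mul, trace_smul, smul_eq_mul, Complex.sub_re,
      Complex.re_ofReal_mul] at h1
    linarith
  have hasum : ∑ y, (trace (ρ * D y)).re = (trace ρ).re := by
    rw [← Complex.re_sum, ← trace_sum, ← Finset.mul_sum, hDsum, Matrix.mul_one]
  have hpsum : ∑ i, p i = (trace ρ).re := by
    rw [hρ.1.trace_eq_sum_eigenvalues]
    simp [hpdef]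
  have hmain := hb_classical (I := Fin d × Fin d)
    (fun ij => Complex.normSq ((Uᴴ * V) ij.1 ij.2) * p ij.1) (fun ij => p ij.1) (fun ij => q ij.2)
    (fun y => (trace (ρ * D y)).re) (fun y => (trace (σ * D y)).re) ?_ ?_ ?_
    (fun t ht => hb_key D hD hDsum U V hU hV p q hp hq ρ σ hρ hσ hρU hσV t ht)
  · refine hmain.trans (le_of_eq ?_)
    congr 1
    · rw [Fintype.sum_prod_type]
      refine Finset.sum_congr rfl fun i _ => ?_
      simp only
      rw [← Finset.sum_mul, ← Finset.sum_mul, hrow, one_mul]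
    · rw [Fintype.sum_prod_type_right]
      refine Finset.sum_congr rfl fun j _ => ?_
      simp only
      rw [← Finset.sum_mul, hcol]
  · rintro ⟨i, j⟩ h
    simp only at h ⊢
    have h1 : 0 < p i := lt_of_le_of_ne (hp i) fun h0 => h (by simp [← h0])
    refine ⟨h1, ?_⟩
    have h2 : 0 < Complex.normSq ((Uᴴ * V) i j) * p i :=
      lt_of_le_of_ne (mul_nonneg (Complex.normSq_nonneg _) (hp i)) (Ne.symm h)
    have h3 : Complex.normSq ((Uᴴ * V) i j) * p i ≤ ((Vᴴ * ρ * V) j j).re := by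
      rw [hcol]
      exact Finset.single_le_sum (f := fun i => Complex.normSq ((Uᴴ * V) i j) * p i)
        (fun i _ => mul_nonneg (Complex.normSq_nonneg _) (hp i)) (Finset.mem_univ i)
    exact lt_of_lt_of_le (mul_pos hr (h2.trans_le h3)) (hdomq j)
  · intro y h
    have h1 := lt_of_le_of_ne (ha y) (Ne.symm h)
    exact ⟨h1, lt_of_lt_of_le (mul_pos hr h1) (hdomb y)⟩
  · rw [hasum, ← hpsum, Fintype.sum_prod_type]
    refine Finset.sum_congr rfl fun i _ => ?_
    simp only
    rw [← Finset.sum_mul, hrow, one_mul]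

/-- **Holevo bound.** For a cq-channel `W`, input distribution `P` and POVM
`D = (D_y)_{y∈Y}`, the classical channel `Q(y|x) = Tr(W_x D_y)` satisfies
`I(P;Q) ≤ I(P;W)`. -/
theorem holevo_bound {X : Type} [Fintype X] {d : ℕ} (W : X → Mat d)
    (hW : ∀ x, IsState (W x)) (P : X → ℝ) (hP : IsProbDist P)
    (Y : Type) [Fintype Y] (D : Y → Mat d) (hD : ∀ y, (D y).PosSemidef)
    (hDsum : ∑ y, D y = 1) :
    shannonEntropy (fun y => ∑ x, P x * (Matrix.trace (W x * D y)).re) -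
        ∑ x, P x * shannonEntropy (fun y => (Matrix.trace (W x * D y)).re)
      ≤ mutualInfo P W := by
  set σ := avgState P W with hσdef
  have hterm : ∀ x, ((P x : ℂ) • W x).PosSemidef := fun x =>
    (hW x).1.smul (Complex.zero_le_real.2 (hP.1 x))
  have hσ : σ.PosSemidef := posSemidef_sum _ fun x _ => hterm x
  obtain ⟨V, hV', hV, hσV⟩ := hb_spec σ hσ.1
  have hq := hσ.eigenvalues_nonneg
  set q := hσ.1.eigenvalues with hqdef
  have hb : ∀ y, ∑ x, P x * (trace (W x * D y)).re = (trace (σ * D y)).re := by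
    intro y
    rw [hσdef, avgState, Finset.sum_mul, trace_sum, Complex.re_sum]
    refine Finset.sum_congr rfl fun x _ => ?_
    rw [Matrix.smul_mul, trace_smul, smul_eq_mul, Complex.re_ofReal_mul]
  have hqs : ∀ j, ∑ x, P x * ((Vᴴ * W x * V) j j).re = q j := by
    intro j
    have hdiagσ : Vᴴ * σ * V = diagonal (fun i => (q i : ℂ)) := by
      rw [hσV]
      calc _ = (Vᴴ * V) * diagonal (fun i => (q i : ℂ)) * (Vᴴ * V) := by noncomm_ring
        _ = _ := by rw [hV']; simp
    have h1 : ((Vᴴ * σ * V) j j).re = q j := by rw [hdiagσ]; simp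
    rw [← h1, hσdef, avgState, Finset.mul_sum, Finset.sum_mul, Matrix.sum_apply, Complex.re_sum]
    refine Finset.sum_congr rfl fun x _ => ?_
    rw [Matrix.mul_smul, Matrix.smul_mul, Matrix.smul_apply, smul_eq_mul, Complex.re_ofReal_mul]
  have hx : ∀ x, P x * (∑ y, (trace (W x * D y)).re * Real.log (trace (W x * D y)).re -
        ∑ y, (trace (W x * D y)).re * Real.log (trace (σ * D y)).re) ≤
      P x * (∑ i, (hW x).1.1.eigenvalues i * Real.log ((hW x).1.1.eigenvalues i) -
        ∑ j, ((Vᴴ * W x * V) j j).re * Real.log (q j)) := by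
    intro x
    rcases (hP.1 x).eq_or_lt with h | h
    · simp [← h]
    · refine mul_le_mul_of_nonneg_left ?_ h.le
      refine hb_mono D hD hDsum V hV' hV q hq (W x) σ (hW x).1 hσ hσV (P x) h ?_
      have : σ - (P x : ℂ) • W x = ∑ x' ∈ Finset.univ.erase x, (P x' : ℂ) • W x' := by
        rw [hσdef, avgState, ← Finset.sum_erase_add _ _ (Finset.mem_univ x), add_sub_cancel_right]
      rw [this]
      exact posSemidef_sum _ fun x' _ => hterm x'
  have hsum := Finset.sum_le_sum fun x (_ : x ∈ Finset.univ) => hx x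
  simp only [mul_sub, Finset.sum_sub_distrib] at hsum
  have s1 : ∑ x, P x * ∑ y, (trace (W x * D y)).re * Real.log (trace (σ * D y)).re =
      ∑ y, (trace (σ * D y)).re * Real.log (trace (σ * D y)).re := by
    simp only [Finset.mul_sum]
    rw [Finset.sum_comm]
    refine Finset.sum_congr rfl fun y _ => ?_
    simp only [← mul_assoc]
    rw [← Finset.sum_mul, hb]
  have s2 : ∑ x, P x * ∑ j, ((Vᴴ * W x * V) j j).re * Real.log (q j) =
      ∑ j, q j * Real.log (q j) := by
    simp only [Finset.mul_sum]
    rw [Finset.sum_comm]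
    refine Finset.sum_congr rfl fun y _ => ?_
    simp only [← mul_assoc]
    rw [← Finset.sum_mul, hqs]
  rw [s1, s2] at hsum
  have hlogb : ∀ {I : Type} [Fintype I] (f : I → ℝ),
      -∑ i, f i * Real.logb 2 (f i) = -(∑ i, f i * Real.log (f i)) / Real.log 2 := by
    intro I _ f
    rw [neg_div, Finset.sum_div]
    simp only [Real.logb, mul_div_assoc]
  have hvn : ∀ x, vnEntropy (W x) = -(∑ i, (hW x).1.1.eigenvalues i *
      Real.log ((hW x).1.1.eigenvalues i)) / Real.log 2 := by
    intro x
    rw [vnEntropy, dif_pos (hW x).1.1, hlogb]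
  have hvσ : vnEntropy σ = -(∑ i, q i * Real.log (q i)) / Real.log 2 := by
    rw [vnEntropy, dif_pos hσ.1, hlogb]
  rw [mutualInfo, ← hσdef, condEntropy, hvσ]
  simp only [hvn, shannonEntropy, hlogb, hb, ← mul_div_assoc, ← Finset.sum_div, mul_neg,
    Finset.sum_neg_distrib]
  rw [← sub_div, ← sub_div]
  refine div_le_div_of_nonneg_right ?_ (Real.log_nonneg (by norm_num))
  linarith
end
end
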